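/- Fix an integer r ≥ 2. For multigraphs G₁ = (V₁, E₁, ends₁) and G₂ = (V₂, E₂, ends₂), the superexternal bizonotopal algebras B_{G₁}^{(r)} and B_{G₂}^{(r)} are isomorphic as ℚ-algebras if and only if G₁ and G₂ are isomorphic as multigraphs, i.e., there exist bijections α : V₁ ≃ V₂ and β : E₁ ≃ E₂ with ends₂(β e) = Sym2.map α (ends₁ e) for all e ∈ E₁. -/

import Mathlib

open Finset MvPolynomial

/-- The degree `κ_S` of a subset `S` of vertices of a multigraph `(V, E, ends)`. -/
def multigraphKappa {V E : Type*} [Fintype E] [DecidableEq V]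
    (ends : E → Sym2 V) (S : Finset V) : ℕ :=
  (Finset.univ.filter fun e => ∃ v ∈ S, v ∈ ends e).card

/-- The defining ideal of the `r`-bizonotopal algebra: generated by the
monomials `∏_{v∈S} z_v^{a_v}` with `S` nonempty and `∑_{v∈S} a_v = κ_S + r`. -/
noncomputable def rBizonotopalIdeal {V E : Type*} [Fintype E] [DecidableEq V]
    (ends : E → Sym2 V) (r : ℕ) : Ideal (MvPolynomial V ℚ) :=
  Ideal.span {m : MvPolynomial V ℚ |
    ∃ (S : Finset V) (a : V → ℕ), S.Nonempty ∧
      (∑ v ∈ S, a v = multigraphKappa ends S + r) ∧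
      m = ∏ v ∈ S, X v ^ a v}

/-- The `r`-bizonotopal algebra `B_G^{(r)}` of a multigraph. -/
def rBizonotopal {V E : Type*} [Fintype E] [DecidableEq V]
    (ends : E → Sym2 V) (r : ℕ) : Type _ :=
  MvPolynomial V ℚ ⧸ rBizonotopalIdeal ends r

noncomputable instance {V E : Type*} [Fintype E] [DecidableEq V] (ends : E → Sym2 V)
    (r : ℕ) : CommRing (rBizonotopal ends r) :=
  Ideal.Quotient.commRing _

noncomputable instance {V E : Type*} [Fintype E] [DecidableEq V] (ends : E → Sym2 V)
    (r : ℕ) : Algebra ℚ (rBizonotopal ends r) :=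
  Ideal.Quotient.algebra _

/-!
Write `𝔪` for the ideal of the variables. In the `r`-bizonotopal algebra, a linear form in the
variables of `S` has nilpotency order at most `κ_S + r`, and a polynomial without constant term
whose linear coefficients on `S` are all non-zero has nilpotency order at least `κ_S + r`: a
monomial survives when, for every `T`, its degree in the variables of `T` is less than `κ_T + r`,
and assigning each edge meeting `S` to one of its endpoints in `S` (plus `r - 1` further factors)
produces such a monomial of degree `κ_S + r - 1`.

Since `r ≥ 2`, the defining ideals lie in `𝔪 ^ 2`, so an isomorphism lifts to polynomial
substitutions with mutually inverse linear parts. A non-zero term of the determinant of the linear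
part is a bijection of the vertices, along which the image of a generic linear form on `S` has
non-zero coefficients; comparing nilpotency orders, this bijection does not increase `κ`. Neither
does the bijection coming from the inverse isomorphism, so summing over all `S` forces equality.
Finally, `κ` counts the edges inside each set of vertices, and Möbius inversion recovers from these
counts the number of edges with given endpoints.
-/

/-! ### Reconstructing a multigraph from its degree function -/

theorem eq_of_sum_Iic_eq {P R : Type*} [PartialOrder P] [OrderBot P] [LocallyFiniteOrder P]
    [Ring R] {f g : P → R} (h : ∀ p, ∑ q ∈ Iic p, f q = ∑ q ∈ Iic p, g q) : f = g := by
  classical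
  funext p
  rw [IncidenceAlgebra.moebius_inversion_bot f _ (fun _ ↦ rfl) p,
    IncidenceAlgebra.moebius_inversion_bot g _ h p]

section Reindexing

variable {E₁ E₂ P : Type*} [Fintype E₁] [Fintype E₂] [PartialOrder P] [OrderBot P]
  [LocallyFiniteOrder P] [DecidableLE P]

theorem card_filter_le_eq_sum_card_fiber [DecidableEq P] (f : E₁ → P) (p : P) :
    #{e | f e ≤ p} = ∑ q ∈ Iic p, #{e | f e = q} := by
  rw [card_eq_sum_card_fiberwise (f := f) (t := Iic p) fun e he ↦ by simpa using he]
  refine sum_congr rfl fun q hq ↦ ?_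
  rw [filter_filter]
  congr! 2 with e
  exact ⟨And.right, fun he ↦ ⟨he ▸ mem_Iic.1 hq, he⟩⟩

theorem card_fiber_eq_of_card_filter_le_eq [DecidableEq P] {f : E₁ → P} {g : E₂ → P}
    (h : ∀ p, #{e | f e ≤ p} = #{e | g e ≤ p}) (p : P) :
    #{e | f e = p} = #{e | g e = p} := by
  have sums_eq (p : P) : ∑ q ∈ Iic p, (#{e | f e = q} : ℤ) = ∑ q ∈ Iic p, (#{e | g e = q} : ℤ) :=
    mod_cast by simpa only [card_filter_le_eq_sum_card_fiber] using h p
  exact_mod_cast congrFun (eq_of_sum_Iic_eq sums_eq) p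

theorem exists_equiv_comp_eq_of_card_filter_le_eq {f : E₁ → P} {g : E₂ → P}
    (h : ∀ p, #{e | f e ≤ p} = #{e | g e ≤ p}) : ∃ β : E₁ ≃ E₂, ∀ e, g (β e) = f e := by
  classical
  have fiberEquiv (p : P) : Nonempty ({e // f e = p} ≃ {e // g e = p}) := by
    rw [← Fintype.card_eq, Fintype.card_subtype, Fintype.card_subtype]
    exact card_fiber_eq_of_card_filter_le_eq h p
  exact ⟨Equiv.ofFiberEquiv fun p ↦ (fiberEquiv p).some, Equiv.ofFiberEquiv_map _⟩

end Reindexing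

theorem sym2_toFinset_injective {V : Type*} [DecidableEq V] :
    Function.Injective (Sym2.toFinset : Sym2 V → Finset V) := fun _ _ h ↦
  Sym2.ext fun v ↦ by rw [← Sym2.mem_toFinset, h, Sym2.mem_toFinset]

section Kappa

variable {V V₁ V₂ E E₁ E₂ : Type*} [Fintype E] [Fintype E₁] [Fintype E₂]
  [DecidableEq V] [DecidableEq V₁] [DecidableEq V₂]

theorem multigraphKappa_map {ends₁ : E₁ → Sym2 V₁} {ends₂ : E₂ → Sym2 V₂} {α : V₁ ↪ V₂}
    {β : E₁ ≃ E₂} (h : ∀ e, ends₂ (β e) = Sym2.map α (ends₁ e)) (S : Finset V₁) :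
    multigraphKappa ends₂ (S.map α) = multigraphKappa ends₁ S :=
  (card_equiv β fun e ↦ by simp [h]).symm

theorem card_toFinset_le_add_multigraphKappa_compl [Fintype V] (ends : E → Sym2 V)
    (T : Finset V) :
    #{e | (ends e).toFinset ≤ T} + multigraphKappa ends Tᶜ = Fintype.card E := by
  have meets_compl_iff (e : E) : (∃ v ∈ Tᶜ, v ∈ ends e) ↔ ¬(ends e).toFinset ≤ T := by
    simp [subset_iff, and_comm]
  simp only [multigraphKappa, meets_compl_iff, card_filter_add_card_filter_not, card_univ]

theorem multigraphKappa_univ [Fintype V] (ends : E → Sym2 V) :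
    multigraphKappa ends univ = Fintype.card E := by
  simpa using card_toFinset_le_add_multigraphKappa_compl ends ∅

theorem exists_edge_equiv_of_multigraphKappa_eq [Finite V] {ends₁ : E₁ → Sym2 V}
    {ends₂ : E₂ → Sym2 V} (h : ∀ S, multigraphKappa ends₁ S = multigraphKappa ends₂ S) :
    ∃ β : E₁ ≃ E₂, ∀ e, ends₂ (β e) = ends₁ e := by
  have := Fintype.ofFinite V
  have card_edges : Fintype.card E₁ = Fintype.card E₂ := by
    rw [← multigraphKappa_univ ends₁, h, multigraphKappa_univ]
  have card_inside (T : Finset V) :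
      #{e | (ends₁ e).toFinset ≤ T} = #{e | (ends₂ e).toFinset ≤ T} := by
    have h₁ := card_toFinset_le_add_multigraphKappa_compl ends₁ T
    have h₂ := card_toFinset_le_add_multigraphKappa_compl ends₂ T
    rw [h] at h₁
    omega
  obtain ⟨β, hβ⟩ := exists_equiv_comp_eq_of_card_filter_le_eq card_inside
  exact ⟨β, fun e ↦ sym2_toFinset_injective (hβ e)⟩

theorem forall_multigraphKappa_map_eq_iff [Finite V₂] {ends₁ : E₁ → Sym2 V₁}
    {ends₂ : E₂ → Sym2 V₂} (α : V₁ ≃ V₂) :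
    (∀ S, multigraphKappa ends₂ (S.map α.toEmbedding) = multigraphKappa ends₁ S) ↔
      ∃ β : E₁ ≃ E₂, ∀ e, ends₂ (β e) = Sym2.map α (ends₁ e) := by
  refine ⟨fun h ↦ exists_edge_equiv_of_multigraphKappa_eq fun S ↦ ?_,
    fun ⟨_, hβ⟩ ↦ multigraphKappa_map hβ⟩
  obtain ⟨T, rfl⟩ := (Equiv.finsetCongr α).surjective S
  exact (multigraphKappa_map (β := Equiv.refl E₁) (fun _ ↦ rfl) T).trans (h T).symm

theorem exists_exponent_sum_le_multigraphKappa (ends : E → Sym2 V) (S : Finset V) :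
    ∃ m : V →₀ ℕ, m.support ⊆ S ∧ m.degree = multigraphKappa ends S ∧
      ∀ T : Finset V, ∑ v ∈ T, m v ≤ multigraphKappa ends T := by
  let F : Finset E := {e | ∃ v ∈ S, v ∈ ends e}
  choose g hgS hg using fun e : F ↦ (mem_filter.1 e.2).2
  have sum_eq_card (T : Finset V) :
      ∑ v ∈ T, (∑ e, Finsupp.single (g e) 1 : V →₀ ℕ) v = #{e | g e ∈ T} := by
    simp only [Finsupp.finsetSum_apply, Finsupp.single_apply]
    rw [sum_comm, card_filter]
    simp only [sum_ite_eq]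
  refine ⟨∑ e, Finsupp.single (g e) 1, fun v hv ↦ ?_, ?_, fun T ↦ ?_⟩
  · obtain ⟨e, -, he⟩ := mem_biUnion.1 (Finsupp.support_finsetSum hv)
    rw [mem_singleton.1 (Finsupp.support_single_subset he)]
    exact hgS e
  · simp [F, multigraphKappa]
  · rw [sum_eq_card]
    exact card_le_card_of_injOn Subtype.val
      (fun e he ↦ by simpa using ⟨g e, by simpa using he, hg e⟩) Subtype.val_injective.injOn

end Kappa

theorem apply_equiv_eq_of_le {α β M : Type*} [Finite α] [AddCommMonoid M]
    [PartialOrder M] [IsOrderedCancelAddMonoid M] {f : α → M} {g : β → M} (e : α ≃ β)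
    (e' : β ≃ α) (h : ∀ a, g (e a) ≤ f a) (h' : ∀ b, f (e' b) ≤ g b) (a : α) :
    g (e a) = f a := by
  have := Fintype.ofFinite α
  have := Fintype.ofEquiv α e
  have sum_eq : ∑ a, g (e a) = ∑ a, f a := by
    refine (sum_le_sum fun a _ ↦ h a).antisymm ?_
    rw [e.sum_comp, ← e'.sum_comp]
    exact sum_le_sum fun b _ ↦ h' b
  exact (sum_eq_sum_iff_of_le fun a _ ↦ h a).1 sum_eq a (mem_univ a)

/-! ### Linear parts of polynomials and of polynomial maps -/

section LinearPart

variable {σ τ υ R : Type*}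

section Semiring

variable [CommSemiring R]

theorem mem_idealOfVars_iff {p : MvPolynomial σ R} :
    p ∈ idealOfVars σ R ↔ constantCoeff p = 0 := by
  rw [← pow_one (idealOfVars σ R), mem_pow_idealOfVars_iff', constantCoeff_eq]
  simp [Finsupp.degree_eq_zero_iff]

theorem coeff_single_linearCombination (c : σ →₀ R) (i : σ) :
    coeff (Finsupp.single i 1) (Finsupp.linearCombination R X c : MvPolynomial σ R) = c i := by
  classical
  simp [Finsupp.linearCombination_apply, Finsupp.sum, coeff_sum, coeff_X, Finsupp.single_left_inj,
    eq_comm (a := (0 : R))]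

theorem linearCombination_X_mem_idealOfVars (c : σ →₀ R) :
    Finsupp.linearCombination R X c ∈ idealOfVars σ R := by
  simp [mem_idealOfVars_iff, Finsupp.linearCombination_apply, Finsupp.sum]

/-- The matrix of linear parts of a polynomial substitution `F`, which describes the map induced
on `𝔪 / 𝔪 ^ 2` when `F` preserves the ideal `𝔪` of the variables. It is the transpose of the
Jacobian matrix at the origin: row `i` lists the linear coefficients of `F (X i)`. -/
noncomputable def linearPartMatrix (F : MvPolynomial σ R →ₐ[R] MvPolynomial τ R) : Matrix σ τ R :=
  Matrix.of fun i j ↦ coeff (Finsupp.single j 1) (F (X i))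

theorem coeff_single_map_linearCombination (F : MvPolynomial σ R →ₐ[R] MvPolynomial τ R)
    (c : σ →₀ R) (j : τ) :
    coeff (Finsupp.single j 1) (F (Finsupp.linearCombination R X c)) =
      Finsupp.linearCombination R (fun i ↦ linearPartMatrix F i j) c := by
  simp [Finsupp.linearCombination_apply, Finsupp.sum, coeff_sum, linearPartMatrix]

theorem idealOfVars_le_comap [IsReduced R] {F : MvPolynomial σ R →ₐ[R] MvPolynomial τ R}
    {I : Ideal (MvPolynomial σ R)} {J : Ideal (MvPolynomial τ R)} (hF : I ≤ J.comap F)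
    (hJ : J ≤ idealOfVars τ R) (hI : ∀ i, ∃ n, X i ^ n ∈ I) :
    idealOfVars σ R ≤ (idealOfVars τ R).comap F := by
  rw [Ideal.span_le]
  rintro _ ⟨i, rfl⟩
  obtain ⟨n, hn⟩ := hI i
  have map_mem := mem_idealOfVars_iff.1 (hJ (hF hn))
  rw [map_pow, map_pow] at map_mem
  exact mem_idealOfVars_iff.2 (eq_zero_of_pow_eq_zero map_mem)

end Semiring

variable [CommRing R]

theorem coeff_single_eq_of_sub_mem {p q : MvPolynomial σ R} (h : p - q ∈ idealOfVars σ R ^ 2)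
    (i : σ) : coeff (Finsupp.single i 1) p = coeff (Finsupp.single i 1) q := by
  rw [← sub_eq_zero, ← coeff_sub]
  exact (mem_pow_idealOfVars_iff' _ _).1 h _ (by simp)

theorem exists_sub_linearCombination_mem (p : MvPolynomial σ R) :
    ∃ c : σ →₀ R, (∀ i, c i = coeff (Finsupp.single i 1) p) ∧
      p - (C (constantCoeff p) + Finsupp.linearCombination R X c) ∈ idealOfVars σ R ^ 2 := by
  obtain ⟨c, hc⟩ : ∃ c : σ →₀ R, Finsupp.linearCombination R X c = homogeneousComponent 1 p := by
    rw [← LinearMap.mem_range, Finsupp.range_linearCombination,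
      ← homogeneousSubmodule_one_eq_span_X]
    exact homogeneousComponent_mem 1 p
  refine ⟨c, fun i ↦ ?_, (mem_pow_idealOfVars_iff' _ _).2 fun m hm ↦ ?_⟩
  · rw [← coeff_single_linearCombination, hc, coeff_homogeneousComponent]
    simp
  · classical
    rw [hc, coeff_sub, coeff_add, coeff_homogeneousComponent, coeff_C, constantCoeff_eq]
    obtain rfl | hm₀ := eq_or_ne m 0
    · simp
    · have degree_eq : m.degree = 1 := by
        have := (Finsupp.degree_eq_zero_iff m).not.2 hm₀
        omega
      simp [degree_eq, hm₀.symm]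

theorem pow_sub_pow_mem_pow_succ {A : Type*} [CommRing A] {I : Ideal A} {a b : A} (ha : a ∈ I)
    (hb : b ∈ I) (h : a - b ∈ I ^ 2) (n : ℕ) : a ^ n - b ^ n ∈ I ^ (n + 1) := by
  induction n with
  | zero => simp
  | succ n ih =>
    have split : a ^ (n + 1) - b ^ (n + 1) = a ^ n * (a - b) + (a ^ n - b ^ n) * b := by ring
    rw [split]
    refine add_mem ?_ (pow_succ I (n + 1) ▸ Ideal.mul_mem_mul ih hb)
    exact pow_add I n 2 ▸ Ideal.mul_mem_mul (Ideal.pow_mem_pow ha n) h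

theorem coeff_pow_degree {p : MvPolynomial σ R} (hp : constantCoeff p = 0) (m : σ →₀ ℕ) :
    coeff m (p ^ m.degree) =
      m.multinomial * m.prod fun i n ↦ coeff (Finsupp.single i 1) p ^ n := by
  obtain ⟨c, hc, hpc⟩ := exists_sub_linearCombination_mem p
  rw [hp, map_zero, zero_add] at hpc
  -- Modulo `𝔪 ^ (d + 1)`, the power `p ^ d` depends only on the linear part of `p`.
  have diff_mem := pow_sub_pow_mem_pow_succ (mem_idealOfVars_iff.2 hp)
    (linearCombination_X_mem_idealOfVars c) hpc m.degree
  have coeff_diff := (mem_pow_idealOfVars_iff' _ _).1 diff_mem m (Nat.lt_succ_self _)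
  rw [coeff_sub, sub_eq_zero] at coeff_diff
  rw [coeff_diff, coeff_linearCombination_X_pow, if_pos (by rfl)]
  simp only [hc]

theorem coeff_single_map [Fintype σ] {F : MvPolynomial σ R →ₐ[R] MvPolynomial τ R}
    (hF : idealOfVars σ R ≤ (idealOfVars τ R).comap F) (p : MvPolynomial σ R) (j : τ) :
    coeff (Finsupp.single j 1) (F p) =
      ∑ i, coeff (Finsupp.single i 1) p * linearPartMatrix F i j := by
  obtain ⟨c, hc, hpc⟩ := exists_sub_linearCombination_mem p
  have map_sub_mem : F p - F (C (constantCoeff p) + Finsupp.linearCombination R X c) ∈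
      idealOfVars τ R ^ 2 := by
    rw [← map_sub]
    exact (Ideal.pow_right_mono hF 2).trans (Ideal.le_comap_pow F 2) hpc
  rw [coeff_single_eq_of_sub_mem map_sub_mem, map_add, coeff_add,
    coeff_single_map_linearCombination, ← algebraMap_eq, AlgHom.commutes, algebraMap_eq]
  classical
  simp [coeff_C, Finsupp.linearCombination_apply, Finsupp.sum_fintype, hc,
    (Finsupp.single_ne_zero.2 one_ne_zero).symm]

theorem linearPartMatrix_comp [Fintype τ] {F : MvPolynomial σ R →ₐ[R] MvPolynomial τ R}
    {G : MvPolynomial τ R →ₐ[R] MvPolynomial υ R}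
    (hG : idealOfVars τ R ≤ (idealOfVars υ R).comap G) :
    linearPartMatrix (G.comp F) = linearPartMatrix F * linearPartMatrix G := by
  ext i k
  exact coeff_single_map hG (F (X i)) k

theorem linearPartMatrix_eq_one [DecidableEq σ] {F : MvPolynomial σ R →ₐ[R] MvPolynomial σ R}
    (hF : ∀ i, F (X i) - X i ∈ idealOfVars σ R ^ 2) : linearPartMatrix F = 1 := by
  ext i j
  rw [linearPartMatrix, Matrix.of_apply, coeff_single_eq_of_sub_mem (hF i), coeff_X,
    Matrix.one_apply]
  simp [Finsupp.single_left_inj]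

theorem exists_lift_quotient {A : Type*} [CommRing A] [Algebra R A] {I : Ideal (MvPolynomial σ R)}
    {J : Ideal A} (φ : (MvPolynomial σ R ⧸ I) →ₐ[R] A ⧸ J) :
    ∃ F : MvPolynomial σ R →ₐ[R] A,
      ∀ p, Ideal.Quotient.mk J (F p) = φ (Ideal.Quotient.mk I p) := by
  choose P hP using fun i ↦ Ideal.Quotient.mk_surjective (φ (Ideal.Quotient.mk I (X i)))
  have comp_eq : (Ideal.Quotient.mkₐ R J).comp (aeval P) = φ.comp (Ideal.Quotient.mkₐ R I) :=
    algHom_ext fun i ↦ by simp [hP]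
  exact ⟨aeval P, fun p ↦ DFunLike.congr_fun comp_eq p⟩

theorem linearPartMatrix_mul_eq_one [Fintype τ] [DecidableEq σ]
    {F : MvPolynomial σ R →ₐ[R] MvPolynomial τ R} {G : MvPolynomial τ R →ₐ[R] MvPolynomial σ R}
    {I : Ideal (MvPolynomial σ R)} (hI : I ≤ idealOfVars σ R ^ 2)
    (hG : idealOfVars τ R ≤ (idealOfVars σ R).comap G) (hGF : ∀ p, G (F p) - p ∈ I) :
    linearPartMatrix F * linearPartMatrix G = 1 := by
  rw [← linearPartMatrix_comp hG]
  exact linearPartMatrix_eq_one fun i ↦ hI (hGF (X i))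

theorem exists_lift_quotient_equiv {I : Ideal (MvPolynomial σ R)} {J : Ideal (MvPolynomial τ R)}
    (φ : (MvPolynomial σ R ⧸ I) ≃ₐ[R] MvPolynomial τ R ⧸ J) :
    ∃ (F : MvPolynomial σ R →ₐ[R] MvPolynomial τ R) (G : MvPolynomial τ R →ₐ[R] MvPolynomial σ R),
      I ≤ J.comap F ∧ J ≤ I.comap G ∧ (∀ p, G (F p) - p ∈ I) ∧ ∀ q, F (G q) - q ∈ J := by
  obtain ⟨F, hF⟩ := exists_lift_quotient φ.toAlgHom
  obtain ⟨G, hG⟩ := exists_lift_quotient φ.symm.toAlgHom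
  refine ⟨F, G, fun p hp ↦ ?_, fun q hq ↦ ?_, fun p ↦ ?_, fun q ↦ ?_⟩
  · rw [Ideal.mem_comap, ← Ideal.Quotient.eq_zero_iff_mem, hF, Ideal.Quotient.eq_zero_iff_mem.2 hp,
      map_zero]
  · rw [Ideal.mem_comap, ← Ideal.Quotient.eq_zero_iff_mem, hG, Ideal.Quotient.eq_zero_iff_mem.2 hq,
      map_zero]
  · rw [← Ideal.Quotient.eq]
    simp [hF, hG]
  · rw [← Ideal.Quotient.eq]
    simp [hF, hG]

theorem exists_lift_linearPartMatrix_mul_eq_one [Fintype σ] [Fintype τ] [DecidableEq σ]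
    [DecidableEq τ] [IsReduced R] {I : Ideal (MvPolynomial σ R)} {J : Ideal (MvPolynomial τ R)}
    (hI : I ≤ idealOfVars σ R ^ 2) (hJ : J ≤ idealOfVars τ R ^ 2) (hXI : ∀ i, ∃ n, X i ^ n ∈ I)
    (hXJ : ∀ j, ∃ n, X j ^ n ∈ J) (φ : (MvPolynomial σ R ⧸ I) ≃ₐ[R] MvPolynomial τ R ⧸ J) :
    ∃ (F : MvPolynomial σ R →ₐ[R] MvPolynomial τ R) (G : MvPolynomial τ R →ₐ[R] MvPolynomial σ R),
      I ≤ J.comap F ∧ J ≤ I.comap G ∧ linearPartMatrix F * linearPartMatrix G = 1 ∧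
        linearPartMatrix G * linearPartMatrix F = 1 := by
  obtain ⟨F, G, hF, hG, hGF, hFG⟩ := exists_lift_quotient_equiv φ
  have hF' := idealOfVars_le_comap hF (hJ.trans (Ideal.pow_le_self two_ne_zero)) hXI
  have hG' := idealOfVars_le_comap hG (hI.trans (Ideal.pow_le_self two_ne_zero)) hXJ
  exact ⟨F, G, hF, hG, linearPartMatrix_mul_eq_one hI hG' hGF,
    linearPartMatrix_mul_eq_one hJ hF' hFG⟩

end LinearPart

/-! ### Powers of linear forms in the bizonotopal ideal -/

theorem multinomial_ne_zero {σ : Type*} (m : σ →₀ ℕ) : m.multinomial ≠ 0 :=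
  (Nat.multinomial_pos _ _).ne'

theorem sum_eq_degree_of_support_subset {σ : Type*} {m : σ →₀ ℕ} {S : Finset σ}
    (h : m.support ⊆ S) : ∑ i ∈ S, m i = m.degree :=
  (sum_subset h fun _ _ ↦ Finsupp.notMem_support_iff.1).symm

theorem degree_eq_and_support_subset_of_mem_support_linearCombination_pow {σ R : Type*}
    [CommSemiring R] {c : σ →₀ R} {n : ℕ} {m : σ →₀ ℕ}
    (hm : m ∈ (Finsupp.linearCombination R X c ^ n : MvPolynomial σ R).support) :
    m.degree = n ∧ m.support ⊆ c.support := by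
  rw [mem_support_iff, coeff_linearCombination_X_pow] at hm
  split_ifs at hm with h
  · refine ⟨h, fun i hi ↦ Finsupp.mem_support_iff.2 fun hci ↦ hm ?_⟩
    rw [Finsupp.prod, prod_eq_zero hi (by rw [hci, zero_pow (Finsupp.mem_support_iff.1 hi)]),
      mul_zero]
  · exact absurd rfl hm

section Bizonotopal

variable {V E : Type*} [Fintype E] [DecidableEq V] {ends : E → Sym2 V} {r : ℕ}

theorem rBizonotopalIdeal_eq_span_monomial :
    rBizonotopalIdeal ends r = Ideal.span ((fun m ↦ monomial m (1 : ℚ)) ''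
      {m | ∃ S : Finset V, S.Nonempty ∧ m.support ⊆ S ∧
        m.degree = multigraphKappa ends S + r}) := by
  rw [rBizonotopalIdeal]
  congr 1
  ext p
  constructor
  · rintro ⟨S, a, hS, ha, rfl⟩
    rw [prod_X_pow]
    refine ⟨_, ⟨S, hS, Finsupp.support_indicator_subset _ _, ?_⟩, rfl⟩
    rw [← ha, ← sum_eq_degree_of_support_subset (Finsupp.support_indicator_subset _ _)]
    exact sum_congr rfl fun v hv ↦ Finsupp.indicator_of_mem hv _
  · rintro ⟨m, ⟨S, hS, hmS, hm⟩, rfl⟩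
    refine ⟨S, m, hS, (sum_eq_degree_of_support_subset hmS).trans hm, ?_⟩
    simp only [monomial_eq, C_1, one_mul]
    exact Finsupp.prod_of_support_subset _ hmS _ fun _ _ ↦ pow_zero _

theorem mem_rBizonotopalIdeal_iff {p : MvPolynomial V ℚ} :
    p ∈ rBizonotopalIdeal ends r ↔ ∀ m ∈ p.support, ∃ S : Finset V, S.Nonempty ∧
      multigraphKappa ends S + r ≤ ∑ v ∈ S, m v := by
  rw [rBizonotopalIdeal_eq_span_monomial, mem_ideal_span_monomial_image]
  refine forall₂_congr fun m _ ↦ ⟨?_, ?_⟩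
  · rintro ⟨m', ⟨S, hS, hm'S, hm'⟩, hle⟩
    refine ⟨S, hS, ?_⟩
    rw [← hm', ← sum_eq_degree_of_support_subset hm'S]
    exact sum_le_sum fun v _ ↦ hle v
  · rintro ⟨S, hS, hle⟩
    have support_filter_subset : (m.filter (· ∈ S)).support ⊆ S := fun v hv ↦
      (mem_filter.1 (Finsupp.support_filter (· ∈ S) m ▸ hv)).2
    have sum_filter : ∑ v ∈ S, m v = (m.filter (· ∈ S)).degree := by
      rw [← sum_eq_degree_of_support_subset support_filter_subset]
      exact sum_congr rfl fun v hv ↦ (Finsupp.filter_apply_pos _ _ hv).symm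
    obtain ⟨m', hm', hdeg⟩ := Finsupp.exists_le_degree_eq _ _ (sum_filter ▸ hle)
    refine ⟨m', ⟨S, hS, (Finsupp.support_mono hm').trans support_filter_subset, hdeg⟩,
      hm'.trans fun v ↦ ?_⟩
    rw [Finsupp.filter_apply]
    split_ifs <;> simp

theorem rBizonotopalIdeal_le_idealOfVars_pow {n : ℕ} (hn : n ≤ r) :
    rBizonotopalIdeal ends r ≤ idealOfVars V ℚ ^ n := by
  intro p hp
  refine (mem_pow_idealOfVars_iff _ _).2 fun m hm ↦ ?_
  obtain ⟨S, -, hS⟩ := mem_rBizonotopalIdeal_iff.1 hp m hm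
  calc n ≤ multigraphKappa ends S + r := le_add_of_le_right hn
    _ ≤ ∑ v ∈ S, m v := hS
    _ ≤ m.degree := sum_le_sum_of_ne_zero fun v _ ↦ Finsupp.mem_support_iff.2

theorem rBizonotopalIdeal_le_idealOfVars (hr : 0 < r) :
    rBizonotopalIdeal ends r ≤ idealOfVars V ℚ := by
  simpa using rBizonotopalIdeal_le_idealOfVars_pow (ends := ends) hr

theorem linearCombination_pow_mem_rBizonotopalIdeal {S : Finset V} (hS : S.Nonempty) {c : V →₀ ℚ}
    (hc : c.support ⊆ S) :
    Finsupp.linearCombination ℚ X c ^ (multigraphKappa ends S + r) ∈ rBizonotopalIdeal ends r := by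
  refine mem_rBizonotopalIdeal_iff.2 fun m hm ↦ ⟨S, hS, ?_⟩
  obtain ⟨degree_eq, support_subset⟩ :=
    degree_eq_and_support_subset_of_mem_support_linearCombination_pow hm
  rw [sum_eq_degree_of_support_subset (support_subset.trans hc), degree_eq]

theorem exists_X_pow_mem_rBizonotopalIdeal (v : V) : ∃ n, X v ^ n ∈ rBizonotopalIdeal ends r :=
  ⟨multigraphKappa ends {v} + r, by
    simpa using linearCombination_pow_mem_rBizonotopalIdeal (c := Finsupp.single v 1)
      (singleton_nonempty v) Finsupp.support_single_subset⟩

theorem multigraphKappa_add_le_of_pow_mem (hr : 0 < r) {S : Finset V} (hS : S.Nonempty)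
    {p : MvPolynomial V ℚ} (hp₀ : constantCoeff p = 0)
    (hp : ∀ v ∈ S, coeff (Finsupp.single v 1) p ≠ 0) {k : ℕ}
    (hk : p ^ k ∈ rBizonotopalIdeal ends r) : multigraphKappa ends S + r ≤ k := by
  obtain ⟨v₀, hv₀⟩ := hS
  obtain ⟨m, hmS, hdeg, hle⟩ := exists_exponent_sum_le_multigraphKappa ends S
  set m' := m + Finsupp.single v₀ (r - 1)
  have degree_eq : m'.degree = multigraphKappa ends S + (r - 1) := by
    rw [map_add, hdeg, Finsupp.degree_single]
  have support_subset : m'.support ⊆ S :=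
    Finsupp.support_add.trans (union_subset hmS (Finsupp.support_single_subset.trans
      (singleton_subset_iff.2 hv₀)))
  by_contra! hlt
  have pow_mem : p ^ m'.degree ∈ rBizonotopalIdeal ends r :=
    Ideal.pow_mem_of_pow_mem _ hk (by omega)
  have mem_support : m' ∈ (p ^ m'.degree).support := by
    rw [mem_support_iff, coeff_pow_degree hp₀]
    exact mul_ne_zero (Nat.cast_ne_zero.2 (multinomial_ne_zero m'))
      (prod_ne_zero_iff.2 fun v hv ↦ pow_ne_zero _ (hp v (support_subset hv)))
  obtain ⟨T, -, hT⟩ := mem_rBizonotopalIdeal_iff.1 pow_mem m' mem_support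
  have sum_single_le : ∑ v ∈ T, Finsupp.single v₀ (r - 1) v ≤ r - 1 :=
    (sum_le_sum_of_ne_zero fun v _ ↦ Finsupp.mem_support_iff.2).trans
      (Finsupp.degree_single v₀ (r - 1)).le
  have sum_le : ∑ v ∈ T, m' v ≤ multigraphKappa ends T + (r - 1) := by
    simpa [m', sum_add_distrib] using add_le_add (hle T) sum_single_le
  omega

end Bizonotopal

/-! ### Isomorphisms of bizonotopal algebras -/

section Matrix

variable {m n R : Type*} [Fintype m] [Fintype n] [DecidableEq m] [DecidableEq n] [CommRing R]

theorem exists_perm_forall_apply_ne_zero_of_det_ne_zero {A : Matrix n n R} (hA : A.det ≠ 0) :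
    ∃ π : Equiv.Perm n, ∀ i, A i (π i) ≠ 0 := by
  rw [← Matrix.det_transpose, Matrix.det_apply] at hA
  obtain ⟨π, -, hπ⟩ := exists_ne_zero_of_sum_ne_zero hA
  exact ⟨π, fun i hi ↦ hπ (by rw [prod_eq_zero (mem_univ i) hi, smul_zero])⟩

theorem exists_equiv_forall_apply_ne_zero_of_mul_eq_one [Nontrivial R] {L : Matrix m n R}
    {M : Matrix n m R} (hLM : L * M = 1) (hML : M * L = 1) : ∃ σ : m ≃ n, ∀ i, L i (σ i) ≠ 0 := by
  let e : m ≃ n := Fintype.equivOfCardEq (Matrix.square_of_invertible L M hLM hML)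
  have mul_eq_one : L.submatrix id e * M.submatrix e id = 1 := by
    rw [Matrix.submatrix_mul_equiv, hLM, Matrix.submatrix_id_id]
  obtain ⟨π, hπ⟩ := exists_perm_forall_apply_ne_zero_of_det_ne_zero
    (Matrix.isUnit_det_of_right_inverse mul_eq_one).ne_zero
  exact ⟨π.trans e, hπ⟩

end Matrix

theorem exists_support_subset_forall_linearCombination_ne_zero {ι κ K : Type*} [Field K]
    [Infinite K] {S : Finset ι} {T : Finset κ} {a : ι → κ → K}
    (h : ∀ j ∈ T, ∃ i ∈ S, a i j ≠ 0) :
    ∃ c : ι →₀ K, c.support ⊆ S ∧ ∀ j ∈ T, Finsupp.linearCombination K (fun i ↦ a i j) c ≠ 0 := by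
  have exists_supported (j : T) : ∃ c ∈ Finsupp.supported K K (S : Set ι),
      Finsupp.linearCombination K (fun i ↦ a i j) c ≠ 0 := by
    obtain ⟨i, hi, hij⟩ := h j j.2
    exact ⟨Finsupp.single i 1, Finsupp.single_mem_supported K 1 hi, by simpa using hij⟩
  obtain ⟨c, hcS, hc⟩ :=
    Module.Dual.exists_forall_mem_ne_zero_of_forall_exists _ _ exists_supported
  exact ⟨c, mod_cast hcS, fun j hj ↦ hc ⟨j, hj⟩⟩

section Isomorphism

variable {V₁ V₂ E₁ E₂ : Type*} [Fintype E₁] [Fintype E₂] [DecidableEq V₁] [DecidableEq V₂]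
  {ends₁ : E₁ → Sym2 V₁} {ends₂ : E₂ → Sym2 V₂} {r : ℕ}

theorem multigraphKappa_map_le (hr : 0 < r) {F : MvPolynomial V₁ ℚ →ₐ[ℚ] MvPolynomial V₂ ℚ}
    (hF : rBizonotopalIdeal ends₁ r ≤ (rBizonotopalIdeal ends₂ r).comap F) {σ : V₁ ↪ V₂}
    (hσ : ∀ v, linearPartMatrix F v (σ v) ≠ 0) (S : Finset V₁) :
    multigraphKappa ends₂ (S.map σ) ≤ multigraphKappa ends₁ S := by
  obtain rfl | hS := S.eq_empty_or_nonempty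
  · simp [multigraphKappa]
  obtain ⟨c, hcS, hc⟩ := exists_support_subset_forall_linearCombination_ne_zero
    (T := S.map σ) (forall_mem_map.2 fun v hv ↦ ⟨v, hv, hσ v⟩)
  have map_idealOfVars := idealOfVars_le_comap hF (rBizonotopalIdeal_le_idealOfVars hr)
    exists_X_pow_mem_rBizonotopalIdeal
  have pow_mem : F (Finsupp.linearCombination ℚ X c) ^ (multigraphKappa ends₁ S + r) ∈
      rBizonotopalIdeal ends₂ r := by
    rw [← map_pow]
    exact hF (linearCombination_pow_mem_rBizonotopalIdeal hS hcS)
  refine le_of_add_le_add_right (multigraphKappa_add_le_of_pow_mem hr hS.map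
    (mem_idealOfVars_iff.1 (map_idealOfVars (linearCombination_X_mem_idealOfVars c)))
    (fun w hw ↦ ?_) pow_mem)
  rw [coeff_single_map_linearCombination]
  exact hc w hw

theorem exists_equiv_multigraphKappa_map_eq [Finite V₁] [Finite V₂] (hr : 2 ≤ r)
    (φ : rBizonotopal ends₁ r ≃ₐ[ℚ] rBizonotopal ends₂ r) :
    ∃ α : V₁ ≃ V₂, ∀ S, multigraphKappa ends₂ (S.map α.toEmbedding) = multigraphKappa ends₁ S := by
  have := Fintype.ofFinite V₁
  have := Fintype.ofFinite V₂
  obtain ⟨F, G, hF, hG, hFG, hGF⟩ := exists_lift_linearPartMatrix_mul_eq_one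
    (rBizonotopalIdeal_le_idealOfVars_pow hr) (rBizonotopalIdeal_le_idealOfVars_pow hr)
    exists_X_pow_mem_rBizonotopalIdeal exists_X_pow_mem_rBizonotopalIdeal φ
  obtain ⟨σ, hσ⟩ := exists_equiv_forall_apply_ne_zero_of_mul_eq_one hFG hGF
  obtain ⟨τ, hτ⟩ := exists_equiv_forall_apply_ne_zero_of_mul_eq_one hGF hFG
  have hr₀ : 0 < r := zero_lt_two.trans_le hr
  exact ⟨σ, apply_equiv_eq_of_le (Equiv.finsetCongr σ) (Equiv.finsetCongr τ)
    (multigraphKappa_map_le hr₀ (σ := σ.toEmbedding) hF hσ)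
    (multigraphKappa_map_le hr₀ (σ := τ.toEmbedding) hG hτ)⟩

theorem rename_mem_rBizonotopalIdeal_iff {α : V₁ ≃ V₂}
    (h : ∀ S, multigraphKappa ends₂ (S.map α.toEmbedding) = multigraphKappa ends₁ S)
    {p : MvPolynomial V₁ ℚ} :
    rename α p ∈ rBizonotopalIdeal ends₂ r ↔ p ∈ rBizonotopalIdeal ends₁ r := by
  simp only [mem_rBizonotopalIdeal_iff, support_rename_of_injective α.injective, forall_mem_image,
    (Equiv.finsetCongr α).surjective.exists, Equiv.finsetCongr_apply, h, map_nonempty, sum_map,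
    Equiv.toEmbedding_apply, Finsupp.mapDomain_equiv_apply, Equiv.symm_apply_apply]

theorem nonempty_rBizonotopal_algEquiv {α : V₁ ≃ V₂}
    (h : ∀ S, multigraphKappa ends₂ (S.map α.toEmbedding) = multigraphKappa ends₁ S) :
    Nonempty (rBizonotopal ends₁ r ≃ₐ[ℚ] rBizonotopal ends₂ r) := by
  have comap_eq : (rBizonotopalIdeal ends₂ r).comap (renameEquiv ℚ α : _ →+* _) =
      rBizonotopalIdeal ends₁ r :=
    Ideal.ext fun _ ↦ rename_mem_rBizonotopalIdeal_iff h
  have map_eq : rBizonotopalIdeal ends₂ r =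
      (rBizonotopalIdeal ends₁ r).map (renameEquiv ℚ α : _ →+* _) := by
    rw [← comap_eq]
    exact (Ideal.map_comap_of_surjective _ (renameEquiv ℚ α).surjective _).symm
  exact ⟨Ideal.quotientEquivAlg _ _ (renameEquiv ℚ α) map_eq⟩

end Isomorphism

/-- For `r ≥ 2`, the superexternal bizonotopal algebras of two multigraphs are
isomorphic as `ℚ`-algebras if and only if the multigraphs are isomorphic. -/
theorem rBizonotopal_iso_iff {V₁ E₁ V₂ E₂ : Type*}
    [Fintype V₁] [Fintype E₁] [DecidableEq V₁]
    [Fintype V₂] [Fintype E₂] [DecidableEq V₂]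
    (ends₁ : E₁ → Sym2 V₁) (ends₂ : E₂ → Sym2 V₂)
    (r : ℕ) (hr : 2 ≤ r) :
    Nonempty (rBizonotopal ends₁ r ≃ₐ[ℚ] rBizonotopal ends₂ r) ↔
      ∃ (α : V₁ ≃ V₂) (β : E₁ ≃ E₂), ∀ e : E₁, ends₂ (β e) = Sym2.map α (ends₁ e) := by
  constructor
  · rintro ⟨φ⟩
    obtain ⟨α, hα⟩ := exists_equiv_multigraphKappa_map_eq hr φ
    exact ⟨α, (forall_multigraphKappa_map_eq_iff α).1 hα⟩
  · rintro ⟨α, hβ⟩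
    exact nonempty_rBizonotopal_algEquiv ((forall_multigraphKappa_map_eq_iff α).2 hβ)
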